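/- arXiv:2104.13905 — 2 statements merged into one kernel-verified Lean document; each statement's English description precedes it below -/
import Mathlib

section
/- For every 1 ≤ Ψ < λ one has P_{c,Ψ} < P_{c,Ψ+1} and P_{e,Ψ} < P_{e,Ψ+1}; for every Ψ ≥ λ one has P_{c,Ψ} = P_{c,λ} and P_{e,Ψ} = P_{e,λ}; and P_{c,λ} + P_{e,λ} = 1. -/
open MeasureTheory ProbabilityTheory
open scoped BigOperators Classical ENNReal

/-- The Euclidean norm on `Fin n → ℝ`. -/
noncomputable def eucNorm {n : ℕ} (v : Fin n → ℝ) : ℝ :=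
  Real.sqrt (∑ i, v i ^ 2)

/-- The BPSK modulation map: `c ∈ F₂ⁿ` is sent to the point of `ℝⁿ`
with coordinates `A(1 - 2 cᵢ)`. -/
noncomputable def bpsk (n : ℕ) (A : ℝ) (c : Fin n → ZMod 2) : Fin n → ℝ :=
  fun i => A * (1 - 2 * ((c i).val : ℝ))

/-- The set of points equidistant from two distinct higher-rate BPSK points. -/
def ambigSet (n : ℕ) (A : ℝ) (Ch : Set (Fin n → ZMod 2)) : Set (Fin n → ℝ) :=
  {y | ∃ c₁ ∈ Ch, ∃ c₂ ∈ Ch, c₁ ≠ c₂ ∧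
    eucNorm (y - bpsk n A c₁) = eucNorm (y - bpsk n A c₂)}

/-- The order-`s` decoding region `Z_s(c)`. -/
def Zreg (n : ℕ) (A : ℝ) (Ch Cl : Set (Fin n → ZMod 2)) (s : ℕ)
    (c : Fin n → ZMod 2) : Set (Fin n → ℝ) :=
  {y | y ∉ ambigSet n A Ch ∧ ∃ T : Finset (Fin n → ZMod 2),
    T.card = s - 1 ∧ (↑T : Set (Fin n → ZMod 2)) ⊆ Ch \ Cl ∧
    (∀ c' ∈ T, eucNorm (y - bpsk n A c') < eucNorm (y - bpsk n A c)) ∧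
    ∀ c' ∈ Ch, c' ≠ c → c' ∉ T →
      eucNorm (y - bpsk n A c) < eucNorm (y - bpsk n A c')}

/-- The standard Gaussian measure on `ℝⁿ` (n i.i.d. N(0,1) coordinates). -/
noncomputable def gaussPi (n : ℕ) : Measure (Fin n → ℝ) :=
  Measure.pi fun _ => gaussianReal 0 1

/-!
Off the ties, the rank of a codeword at `y` is one more than the number of codewords closer to `y`,
and a list decoder stops at the lowest-ranked member of `L`; so the decoding regions are pairwise
disjoint and, up to null sets, cover the space.

Every order below one that occurs for `c` also occurs for `c`: contracting a generic point of the
region towards the point of `c` drops the closer codewords one at a time. Since each region is an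
open set minus the null set of ties, all these regions have positive probability, which gives
strict monotonicity in the list size.

Coordinate reflections permute the constellation like translations by codewords of `L`, so an order
that occurs for one member of `L` occurs for all. Hence no region has order above the supremum list
rank, and the regions up to that order already exhaust the probability.
-/

lemma exists_gt_card_filter_lt_eq {ι α : Type*} [LinearOrder α] [DenselyOrdered α] [NoMaxOrder α]
    {T : Finset ι} {f : ι → α} (hf : Set.InjOn f T) {a : α} (ha : ∀ i ∈ T, a < f i) {r : ℕ}
    (hr : r ≤ T.card) :
    ∃ θ > a, (∀ i ∈ T, f i ≠ θ) ∧ (T.filter (θ < f ·)).card = r := by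
  induction T using Finset.induction_on_min_value f generalizing a with
  | empty =>
    obtain ⟨θ, hθ⟩ := exists_gt a
    exact ⟨θ, hθ, by simp, by simpa [eq_comm] using hr⟩
  | insert m T hm hmin ih =>
    have hlt : ∀ i ∈ T, f m < f i := fun i hi => lt_of_le_of_ne (hmin i hi) fun h =>
      hm (hf (by simp) (by simp [hi]) h ▸ hi)
    obtain rfl | hr' := hr.eq_or_lt
    · obtain ⟨θ, haθ, hθm⟩ := exists_between (ha m (Finset.mem_insert_self m T))
      have hθ : ∀ i ∈ insert m T, θ < f i := by
        simpa [hθm] using fun i hi => hθm.trans (hlt i hi)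
      exact ⟨θ, haθ, fun i hi => (hθ i hi).ne', by rw [Finset.filter_true_of_mem hθ]⟩
    · rw [Finset.card_insert_of_notMem hm, Nat.lt_succ_iff] at hr'
      obtain ⟨θ, hθm, hne, hcard⟩ := ih (hf.mono (by simp)) hlt hr'
      refine ⟨θ, (ha m (Finset.mem_insert_self m T)).trans hθm, ?_, ?_⟩
      · simpa [hθm.ne] using hne
      · rw [Finset.filter_insert, if_neg hθm.not_gt, hcard]

lemma sum_Icc_min_lt_sum_Icc_min_succ {g : ℕ → ℝ≥0∞} (hg : ∀ s, g s ≠ ∞) {l Ψ : ℕ} (hΨ : Ψ < l)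
    (hpos : g (Ψ + 1) ≠ 0) :
    ∑ s ∈ Finset.Icc 1 (min l Ψ), g s < ∑ s ∈ Finset.Icc 1 (min l (Ψ + 1)), g s := by
  rw [min_eq_right hΨ.le, min_eq_right hΨ, Finset.sum_Icc_succ_top (by omega)]
  exact ENNReal.lt_add_right (ENNReal.sum_ne_top.2 fun s _ => hg s) hpos

lemma nontrivial_of_card_eq_two_pow {α : Type*} {s : Set α} {k : ℕ} (hk : k ≠ 0)
    (hcard : Nat.card s = 2 ^ k) : s.Nontrivial := by
  have hone : 1 < Nat.card s := hcard ▸ Nat.one_lt_two_pow hk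
  have : Finite s := Nat.finite_of_card_ne_zero (by omega)
  exact Set.nontrivial_coe_sort.1 (Finite.one_lt_card_iff_nontrivial.1 hone)

section Metric

open Filter Topology

variable {ι E : Type*} [PseudoMetricSpace E] {p : ι → E} {H L : Set ι}

/-- The points equidistant from two distinct members of the constellation `p` restricted to `H`;
this is `ambigSet` for an arbitrary constellation. -/
def tieSet (p : ι → E) (H : Set ι) : Set E :=
  {y | ∃ i ∈ H, ∃ j ∈ H, i ≠ j ∧ dist y (p i) = dist y (p j)}

/-- The order-`s` decoding region of `c` for an arbitrary constellation `p`; it is phrased exactly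
as `Zreg`, so orders `0` and `1` coincide because of the truncated subtraction. -/
def decodingRegion (p : ι → E) (H L : Set ι) (s : ℕ) (c : ι) : Set E :=
  {y | y ∉ tieSet p H ∧ ∃ T : Finset ι, T.card = s - 1 ∧ (T : Set ι) ⊆ H \ L ∧
    (∀ i ∈ T, dist y (p i) < dist y (p c)) ∧
    ∀ i ∈ H, i ≠ c → i ∉ T → dist y (p c) < dist y (p i)}

/-- Geometric uniformity in the sense of Forney, relative to the pair `L ⊆ H`: any member of `L` is
carried to any other by an isometry which permutes the constellation and preserves `H` and `L`. -/
def GeometricallyUniform (p : ι → E) (H L : Set ι) : Prop :=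
  ∀ c ∈ L, ∀ c' ∈ L, ∃ (σ : Equiv.Perm ι) (g : E → E), Isometry g ∧ (∀ i, g (p i) = p (σ i)) ∧
    (∀ i, σ i ∈ H ↔ i ∈ H) ∧ (∀ i, σ i ∈ L ↔ i ∈ L) ∧ σ c = c'

lemma isClosed_tieSet [Finite ι] : IsClosed (tieSet p H) := by
  have htie : tieSet p H = ⋃ i ∈ H, ⋃ j ∈ H, ⋃ _ : i ≠ j, {y | dist y (p i) = dist y (p j)} := by
    ext y
    simp only [tieSet, Set.mem_ofPred_eq, Set.mem_iUnion, exists_prop]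
  rw [htie]
  refine H.toFinite.isClosed_biUnion fun i _ => H.toFinite.isClosed_biUnion fun j _ =>
    isClosed_iUnion_of_finite fun _ => isClosed_eq (by fun_prop) (by fun_prop)

section Rank

variable [Fintype ι]

/-- The members of `H` whose points are strictly closer to `y` than the point of `c`; these are
the candidates a list decoder examines before `c`. -/
noncomputable def closer (p : ι → E) (H : Set ι) (y : E) (c : ι) : Finset ι :=
  {i | i ∈ H ∧ dist y (p i) < dist y (p c)}

/-- The points `y` for which exactly `r` members of `H`, none of them in `L`, precede `c`, and none
is tied with `c`. Unlike in `decodingRegion`, ties among the other members are allowed, which makes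
this set stable under the contraction towards `p c` used below. -/
def rankRegion (p : ι → E) (H L : Set ι) (r : ℕ) (c : ι) : Set E :=
  {y | (∀ i ∈ H, i ≠ c → dist y (p i) ≠ dist y (p c)) ∧
    Disjoint (closer p H y c : Set ι) L ∧ (closer p H y c).card = r}

lemma mem_closer {y : E} {c i : ι} :
    i ∈ closer p H y c ↔ i ∈ H ∧ dist y (p i) < dist y (p c) := by
  simp [closer]

lemma mem_decodingRegion_iff {s : ℕ} {c : ι} (hc : c ∈ H) {y : E} :
    y ∈ decodingRegion p H L s c ↔ y ∉ tieSet p H ∧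
      Disjoint (closer p H y c : Set ι) L ∧ (closer p H y c).card = s - 1 := by
  refine and_congr_right fun hy => ⟨?_, fun ⟨hdisj, hcard⟩ => ?_⟩
  · rintro ⟨T, hcard, hTsub, hlt, hgt⟩
    have hT : closer p H y c = T := by
      ext i
      refine mem_closer.trans ⟨fun ⟨hi, hic⟩ => ?_, fun hi => ⟨(hTsub hi).1, hlt i hi⟩⟩
      by_contra hiT
      exact lt_asymm hic (hgt i hi (by rintro rfl; exact lt_irrefl _ hic) hiT)
    rw [hT]
    exact ⟨Set.disjoint_left.2 fun i hi => (hTsub hi).2, hcard⟩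
  · refine ⟨closer p H y c, hcard,
      fun i hi => ⟨(mem_closer.1 hi).1, Set.disjoint_left.1 hdisj hi⟩,
      fun i hi => (mem_closer.1 hi).2, fun i hi hic hT => ?_⟩
    exact lt_of_le_of_ne (not_lt.1 fun h => hT (mem_closer.2 ⟨hi, h⟩))
      fun h => hy ⟨c, hc, i, hi, hic.symm, h⟩

lemma decodingRegion_eq_rankRegion_sdiff {s : ℕ} {c : ι} (hc : c ∈ H) :
    decodingRegion p H L s c = rankRegion p H L (s - 1) c \ tieSet p H := by
  ext y
  rw [mem_decodingRegion_iff hc]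
  refine ⟨fun ⟨hy, h⟩ => ⟨⟨fun i hi hic heq => hy ⟨i, hi, c, hc, hic, heq⟩, h⟩, hy⟩,
    fun ⟨⟨_, h⟩, hy⟩ => ⟨hy, h⟩⟩

lemma isOpen_rankRegion (r : ℕ) (c : ι) : IsOpen (rankRegion p H L r c) := by
  refine isOpen_iff_eventually.2 fun y ⟨hne, hdisj, hcard⟩ => ?_
  have hd : ∀ i, Tendsto (fun z => dist z (p i)) (𝓝 y) (𝓝 (dist y (p i))) := fun i =>
    (continuous_id.dist continuous_const).tendsto y
  have hcmp : ∀ᶠ z in 𝓝 y, ∀ i ∈ H, i ≠ c → dist z (p i) ≠ dist z (p c) ∧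
      (dist z (p i) < dist z (p c) ↔ dist y (p i) < dist y (p c)) := by
    simp only [eventually_all]
    intro i hi hic
    rcases lt_or_gt_of_ne (hne i hi hic) with h | h
    · filter_upwards [(hd i).eventually_lt (hd c) h] with z hz
      exact ⟨hz.ne, iff_of_true hz h⟩
    · filter_upwards [(hd c).eventually_lt (hd i) h] with z hz
      exact ⟨hz.ne', iff_of_false hz.not_gt h.not_gt⟩
  filter_upwards [hcmp] with z hz
  have hcloser : closer p H z c = closer p H y c := by
    ext i
    simp only [mem_closer]
    refine and_congr_right fun hi => ?_
    obtain rfl | hic := eq_or_ne i c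
    · simp only [lt_irrefl]
    · exact (hz i hi hic).2
  exact ⟨fun i hi hic => (hz i hi hic).1, hcloser ▸ hdisj, hcloser ▸ hcard⟩

end Rank

section Finite

variable [Finite ι]

lemma eq_of_mem_decodingRegion (hLH : L ⊆ H) {s s' : ℕ} (hs : 1 ≤ s) (hs' : 1 ≤ s') {c c' : ι}
    (hc : c ∈ L) (hc' : c' ∈ L) {y : E} (hy : y ∈ decodingRegion p H L s c)
    (hy' : y ∈ decodingRegion p H L s' c') : s = s' ∧ c = c' := by
  have := Fintype.ofFinite ι
  obtain ⟨htie, hdisj, hcard⟩ := (mem_decodingRegion_iff (hLH hc)).1 hy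
  obtain ⟨-, hdisj', hcard'⟩ := (mem_decodingRegion_iff (hLH hc')).1 hy'
  have hle : dist y (p c) ≤ dist y (p c') := not_lt.1 fun h =>
    Set.disjoint_left.1 hdisj (mem_closer.2 ⟨hLH hc', h⟩) hc'
  have hge : dist y (p c') ≤ dist y (p c) := not_lt.1 fun h =>
    Set.disjoint_left.1 hdisj' (mem_closer.2 ⟨hLH hc, h⟩) hc
  obtain rfl : c = c' := by
    by_contra hne
    exact htie ⟨c, hLH hc, c', hLH hc', hne, hle.antisymm hge⟩
  exact ⟨by omega, rfl⟩

lemma exists_mem_decodingRegion (hLH : L ⊆ H) (hL : L.Nonempty) {y : E} (hy : y ∉ tieSet p H) :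
    ∃ s, 1 ≤ s ∧ ∃ c ∈ L, y ∈ decodingRegion p H L s c := by
  have := Fintype.ofFinite ι
  obtain ⟨c, hc, hmin⟩ := L.toFinite.exists_minimalFor (fun i => dist y (p i)) L hL
  have hle : ∀ i ∈ L, dist y (p c) ≤ dist y (p i) := fun i hi =>
    (le_total _ _).elim id (hmin hi)
  refine ⟨(closer p H y c).card + 1, by omega, c, hc, (mem_decodingRegion_iff (hLH hc)).2
    ⟨hy, Set.disjoint_left.2 fun i hi hiL => ?_, by omega⟩⟩
  exact (hle i hiL).not_gt (mem_closer.1 hi).2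

lemma GeometricallyUniform.nonempty_decodingRegion (hunif : GeometricallyUniform p H L)
    (hLH : L ⊆ H) {s : ℕ} {c c' : ι} (hc : c ∈ L) (hc' : c' ∈ L)
    (hne : (decodingRegion p H L s c).Nonempty) : (decodingRegion p H L s c').Nonempty := by
  have := Fintype.ofFinite ι
  obtain ⟨σ, g, hg, hgp, hσH, hσL, rfl⟩ := hunif c hc c' hc'
  obtain ⟨y, hy⟩ := hne
  obtain ⟨htie, hdisj, hcard⟩ := (mem_decodingRegion_iff (hLH hc)).1 hy
  have hdist : ∀ i, dist (g y) (p (σ i)) = dist y (p i) := fun i => by rw [← hgp, hg.dist_eq]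
  have hcloser : closer p H (g y) (σ c) = (closer p H y c).map σ.toEmbedding := by
    ext i
    obtain ⟨i, rfl⟩ := σ.surjective i
    simp [mem_closer, hσH, hdist]
  refine ⟨g y, (mem_decodingRegion_iff (hLH hc')).2 ⟨?_, ?_, ?_⟩⟩
  · rintro ⟨i, hi, j, hj, hij, heq⟩
    obtain ⟨i, rfl⟩ := σ.surjective i
    obtain ⟨j, rfl⟩ := σ.surjective j
    rw [hdist, hdist] at heq
    exact htie ⟨i, (hσH i).1 hi, j, (hσH j).1 hj, ne_of_apply_ne σ hij, heq⟩
  · refine Set.disjoint_left.2 fun i hi => ?_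
    obtain ⟨j, hj, rfl⟩ := Finset.mem_map.1 (hcloser ▸ hi)
    exact fun hjL => Set.disjoint_left.1 hdisj hj ((hσL j).1 hjL)
  · rw [hcloser, Finset.card_map, hcard]

lemma measurableSet_decodingRegion [MeasurableSpace E] [OpensMeasurableSpace E] {s : ℕ} {c : ι}
    (hc : c ∈ H) : MeasurableSet (decodingRegion p H L s c) := by
  have := Fintype.ofFinite ι
  rw [decodingRegion_eq_rankRegion_sdiff hc]
  exact (isOpen_rankRegion _ c).measurableSet.diff isClosed_tieSet.measurableSet

end Finite

variable [MeasurableSpace E]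

/-- Probability of correct decoding of `c₀` with list size at most `Ψ`, for a received vector of
law `μ` and supremum list rank `l`. -/
noncomputable def correctProb (μ : Measure E) (p : ι → E) (H L : Set ι) (l : ℕ) (c₀ : ι) (Ψ : ℕ) :
    ℝ≥0∞ :=
  ∑ s ∈ Finset.Icc 1 (min l Ψ), μ (decodingRegion p H L s c₀)

/-- Probability of undetected error when `c₀` is transmitted and the list size is at most `Ψ`, for
a received vector of law `μ` and supremum list rank `l`. -/
noncomputable def errorProb [Fintype ι] [DecidableEq ι] (μ : Measure E) (p : ι → E)
    (H L : Set ι) (l : ℕ) (c₀ : ι) (Ψ : ℕ) : ℝ≥0∞ :=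
  ∑ s ∈ Finset.Icc 1 (min l Ψ), ∑ c with c ∈ L ∧ c ≠ c₀, μ (decodingRegion p H L s c)

lemma correctProb_add_errorProb [Fintype ι] [DecidableEq ι] {μ : Measure E} {l Ψ : ℕ} {c₀ : ι}
    (hc₀ : c₀ ∈ L) :
    correctProb μ p H L l c₀ Ψ + errorProb μ p H L l c₀ Ψ =
      ∑ s ∈ Finset.Icc 1 (min l Ψ), ∑ c with c ∈ L, μ (decodingRegion p H L s c) := by
  have herase : ({c | c ∈ L ∧ c ≠ c₀} : Finset ι) = ({c | c ∈ L} : Finset ι).erase c₀ := by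
    ext c
    simp [and_comm]
  rw [correctProb, errorProb, ← Finset.sum_add_distrib]
  refine Finset.sum_congr rfl fun s _ => ?_
  rw [herase]
  exact Finset.add_sum_erase _ (fun c => μ (decodingRegion p H L s c)) (by simpa using hc₀)

end Metric

section InnerProduct

open EuclideanGeometry

variable {ι E : Type*} [NormedAddCommGroup E] [InnerProductSpace ℝ E] {p : ι → E} {H L : Set ι}

-- The bisector of `x` and `z` is the hyperplane with normal `inversion x 1 z - x` at level `1 / 2`.
lemma dist_sq_sub_dist_sq_eq_inner_inversion (x y z : E) :
    dist y z ^ 2 - dist y x ^ 2 =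
      dist z x ^ 2 * (1 - 2 * inner ℝ (inversion x 1 z - x) (y - x)) := by
  obtain rfl | hz := eq_or_ne z x
  · simp
  have hzx : ‖z - x‖ ≠ 0 := norm_ne_zero_iff.2 (sub_ne_zero.2 hz)
  have hinv : inversion x 1 z - x = (‖z - x‖ ^ 2)⁻¹ • (z - x) := by
    simp [inversion, dist_eq_norm]
  rw [hinv, real_inner_smul_left, dist_eq_norm, dist_eq_norm, dist_eq_norm,
    ← sub_sub_sub_cancel_right y z x, norm_sub_sq_real, real_inner_comm]
  field_simp
  ring

lemma dist_lt_dist_iff_inner_inversion {x y z : E} :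
    dist y z < dist y x ↔ 1 / 2 < inner ℝ (inversion x 1 z - x) (y - x) := by
  obtain rfl | hz := eq_or_ne z x
  · simp
  have hzx : 0 < dist z x ^ 2 := pow_pos (dist_pos.2 hz) 2
  rw [← pow_lt_pow_iff_left₀ dist_nonneg dist_nonneg two_ne_zero, ← sub_neg,
    dist_sq_sub_dist_sq_eq_inner_inversion, ← neg_pos, ← mul_neg, mul_pos_iff_of_pos_left hzx]
  constructor <;> intro h <;> linarith

lemma dist_eq_dist_iff_inner_inversion {x y z : E} (hz : z ≠ x) :
    dist y z = dist y x ↔ inner ℝ (inversion x 1 z - x) (y - x) = 1 / 2 := by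
  have hzx : dist z x ^ 2 ≠ 0 := pow_ne_zero 2 (dist_pos.2 hz).ne'
  rw [← pow_left_inj₀ dist_nonneg dist_nonneg two_ne_zero, ← sub_eq_zero,
    dist_sq_sub_dist_sq_eq_inner_inversion, mul_eq_zero_iff_left hzx]
  constructor <;> intro h <;> linarith

variable [MeasurableSpace E] {μ : Measure E}

/-- Nondegeneracy of a probability law on `E`: affine hyperplanes are null. This replaces absolute
continuity, and makes sense in every real inner product space. -/
def NullHyperplanes (μ : Measure E) : Prop :=
  ∀ v : E, v ≠ 0 → ∀ b : ℝ, μ {y | inner ℝ v y = b} = 0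

lemma NullHyperplanes.measure_inner_sub_eq_zero (hμ : NullHyperplanes μ) {v : E} (hv : v ≠ 0)
    (x : E) : μ {y | inner ℝ v (y - x) = 0} = 0 := by
  simpa only [inner_sub_right, sub_eq_zero] using hμ v hv (inner ℝ v x)

lemma NullHyperplanes.map_const_add [BorelSpace E] (hμ : NullHyperplanes μ) (x : E) :
    NullHyperplanes (μ.map (x + ·)) := by
  intro v hv b
  rw [(measurableEmbedding_addLeft x).map_apply]
  simpa [Set.preimage, inner_add_right, ← eq_sub_iff_add_eq'] using hμ v hv (b - inner ℝ v x)

lemma NullHyperplanes.measure_tieSet [Countable ι] (hμ : NullHyperplanes μ) (hp : Set.InjOn p H) :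
    μ (tieSet p H) = 0 := by
  have hsub : tieSet p H ⊆ ⋃ i ∈ H, ⋃ j ∈ H, ⋃ _ : i ≠ j,
      {y | inner ℝ (p j - p i) (y - midpoint ℝ (p i) (p j)) = 0} := by
    rintro y ⟨i, hi, j, hj, hij, heq⟩
    rw [← AffineSubspace.mem_perpBisector_iff_dist_eq,
      AffineSubspace.mem_perpBisector_iff_inner_eq_zero, real_inner_comm] at heq
    simp only [Set.mem_iUnion]
    exact ⟨i, hi, j, hj, hij, heq⟩
  refine measure_mono_null hsub ?_
  simp only [measure_iUnion_null_iff]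
  exact fun i hi j hj hij => hμ.measure_inner_sub_eq_zero
    (sub_ne_zero.2 fun h => hij (hp hi hj h.symm)) _

lemma NullHyperplanes.ae_injOn_inner_inversion [Countable ι] (hμ : NullHyperplanes μ)
    (hp : Set.InjOn p H) (x : E) :
    ∀ᵐ y ∂μ, Set.InjOn (fun i => inner ℝ (inversion x 1 (p i) - x) (y - x)) H := by
  simp only [Set.InjOn, ae_all_iff]
  intro i hi j hj
  obtain rfl | hij := eq_or_ne i j
  · simp
  have hv : inversion x 1 (p i) - inversion x 1 (p j) ≠ 0 := sub_ne_zero.2 fun h =>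
    hij (hp hi hj (inversion_injective x one_ne_zero h))
  refine measure_mono_null (fun y hy => ?_) (hμ.measure_inner_sub_eq_zero hv x)
  obtain ⟨heq, -⟩ := Classical.not_imp.1 hy
  rw [Set.mem_ofPred_eq, ← sub_sub_sub_cancel_right _ _ x, inner_sub_left, heq, sub_self]

-- After a perturbation, the `f i` below are distinct. Contracting `y` towards `p c` by the factor
-- `1 / (2 * θ)` keeps exactly the closer points with `θ < f i`, so `θ` can be chosen to keep `r`.
lemma NullHyperplanes.nonempty_rankRegion_of_le [Fintype ι] [BorelSpace E] [μ.IsOpenPosMeasure]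
    (hμ : NullHyperplanes μ) (hp : Set.InjOn p H) {c : ι} (hc : c ∈ H) {q r : ℕ} (hrq : r ≤ q)
    (hne : (rankRegion p H L q c).Nonempty) : (rankRegion p H L r c).Nonempty := by
  obtain ⟨y, ⟨-, hdisj, rfl⟩, hinj⟩ :=
    (Measure.dense_of_ae (hμ.ae_injOn_inner_inversion hp (p c))).inter_open_nonempty _
      (isOpen_rankRegion q c) hne
  set f : ι → ℝ := fun i => inner ℝ (inversion (p c) 1 (p i) - p c) (y - p c) with hf
  have hclose : ∀ i, i ∈ closer p H y c ↔ i ∈ H ∧ 1 / 2 < f i := fun i => by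
    rw [mem_closer, dist_lt_dist_iff_inner_inversion]
  obtain ⟨θ, hθ, hfθ, hcard⟩ := exists_gt_card_filter_lt_eq
    (hinj.mono fun i hi => ((hclose i).1 hi).1) (fun i hi => ((hclose i).1 hi).2) hrq
  have hθ0 : 0 < 2 * θ := by linarith
  set z := AffineMap.homothety (p c) (1 / (2 * θ)) y
  have hz : ∀ i, inner ℝ (inversion (p c) 1 (p i) - p c) (z - p c) = f i / (2 * θ) := fun i => by
    simp [z, hf, AffineMap.homothety_apply, real_inner_smul_right, div_eq_inv_mul]
  have hcloser : closer p H z c = (closer p H y c).filter (θ < f ·) := by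
    ext i
    have hhalf : 1 / 2 < f i / (2 * θ) ↔ θ < f i := by
      rw [lt_div_iff₀ hθ0]; constructor <;> intro h <;> linarith
    rw [Finset.mem_filter, hclose, mem_closer, dist_lt_dist_iff_inner_inversion, hz, hhalf,
      and_assoc, and_iff_right_of_imp hθ.trans]
  refine ⟨z, fun i hi hic heq => ?_, ?_, hcloser ▸ hcard⟩
  · rw [dist_eq_dist_iff_inner_inversion (hp.ne hi hc hic), hz, div_eq_iff hθ0.ne'] at heq
    have hfi : f i = θ := by linarith
    exact hfθ i ((hclose i).2 ⟨hi, hfi ▸ hθ⟩) hfi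
  · rw [hcloser]
    exact hdisj.mono_left (Finset.coe_subset.2 (Finset.filter_subset _ _))

lemma NullHyperplanes.measure_decodingRegion_pos [Finite ι] [BorelSpace E] [μ.IsOpenPosMeasure]
    (hμ : NullHyperplanes μ) (hp : Set.InjOn p H) {c : ι} (hc : c ∈ H) {s t : ℕ} (hst : s ≤ t)
    (hne : (decodingRegion p H L t c).Nonempty) : 0 < μ (decodingRegion p H L s c) := by
  have := Fintype.ofFinite ι
  rw [decodingRegion_eq_rankRegion_sdiff hc] at hne ⊢
  rw [measure_sdiff_null (hμ.measure_tieSet hp)]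
  exact (isOpen_rankRegion _ c).measure_pos μ
    (hμ.nonempty_rankRegion_of_le hp hc (Nat.sub_le_sub_right hst 1) (hne.mono Set.sdiff_subset))

variable [Fintype ι]

lemma NullHyperplanes.sum_measure_decodingRegion_eq_one [BorelSpace E] [IsProbabilityMeasure μ]
    (hμ : NullHyperplanes μ) (hp : Set.InjOn p H) (hLH : L ⊆ H) (hL : L.Nonempty) {l : ℕ}
    (hl : ∀ s, 1 ≤ s → ∀ c ∈ L, (decodingRegion p H L s c).Nonempty → s ≤ l) :
    ∑ s ∈ Finset.Icc 1 l, ∑ c with c ∈ L, μ (decodingRegion p H L s c) = 1 := by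
  have hmeas : ∀ a ∈ Finset.Icc 1 l ×ˢ ({c | c ∈ L} : Finset ι),
      MeasurableSet (decodingRegion p H L a.1 a.2) := fun a ha =>
    measurableSet_decodingRegion (hLH (by simp_all))
  rw [← Finset.sum_product', ← measure_biUnion_finset _ hmeas,
    ← prob_compl_eq_zero_iff (Finset.measurableSet_biUnion _ hmeas)]
  · refine measure_mono_null (fun y hy => ?_) (hμ.measure_tieSet hp)
    by_contra htie
    obtain ⟨s, hs, c, hc, hyc⟩ := exists_mem_decodingRegion hLH hL htie
    refine hy (Set.mem_biUnion (x := (s, c)) ?_ hyc)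
    simpa [hs, hc] using hl s hs c hc ⟨y, hyc⟩
  · rintro ⟨s, c⟩ hsc ⟨s', c'⟩ hsc' hne
    simp only [Finset.coe_product, Set.mem_prod, Finset.mem_coe, Finset.mem_Icc,
      Finset.mem_filter_univ] at hsc hsc'
    refine Set.disjoint_left.2 fun y hy hy' => hne (Prod.ext_iff.2 ?_)
    exact eq_of_mem_decodingRegion hLH hsc.1.1 hsc'.1.1 hsc.2 hsc'.2 hy hy'

theorem stmt6_general [DecidableEq ι] [BorelSpace E] [IsProbabilityMeasure μ] [μ.IsOpenPosMeasure]
    (hμ : NullHyperplanes μ) (hp : Set.InjOn p H) (hLH : L ⊆ H) (hL : L.Nontrivial)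
    (hunif : GeometricallyUniform p H L) {l : ℕ}
    (hl : IsGreatest {s | 1 ≤ s ∧ ∀ c ∈ L, (decodingRegion p H L s c).Nonempty} l)
    {c₀ : ι} (hc₀ : c₀ ∈ L) :
    (∀ Ψ < l, correctProb μ p H L l c₀ Ψ < correctProb μ p H L l c₀ (Ψ + 1) ∧
      errorProb μ p H L l c₀ Ψ < errorProb μ p H L l c₀ (Ψ + 1)) ∧
    (∀ Ψ, l ≤ Ψ → correctProb μ p H L l c₀ Ψ = correctProb μ p H L l c₀ l ∧
      errorProb μ p H L l c₀ Ψ = errorProb μ p H L l c₀ l) ∧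
    correctProb μ p H L l c₀ l + errorProb μ p H L l c₀ l = 1 := by
  have hpos : ∀ s ≤ l, ∀ c ∈ L, 0 < μ (decodingRegion p H L s c) := fun s hs c hc =>
    hμ.measure_decodingRegion_pos hp (hLH hc) hs (hl.1.2 c hc)
  have hle : ∀ s, 1 ≤ s → ∀ c ∈ L, (decodingRegion p H L s c).Nonempty → s ≤ l :=
    fun s hs c hc hne => hl.2 ⟨hs, fun c' hc' => hunif.nonempty_decodingRegion hLH hc hc' hne⟩
  refine ⟨fun Ψ hΨ => ⟨?_, ?_⟩, fun Ψ hΨ => ?_, ?_⟩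
  · exact sum_Icc_min_lt_sum_Icc_min_succ (fun s => measure_ne_top _ _) hΨ (hpos _ hΨ c₀ hc₀).ne'
  · obtain ⟨c, hc, hne⟩ := hL.exists_ne c₀
    refine sum_Icc_min_lt_sum_Icc_min_succ
      (fun s => ENNReal.sum_ne_top.2 fun c _ => measure_ne_top _ _) hΨ fun h0 => ?_
    exact (hpos _ hΨ c hc).ne' (Finset.sum_eq_zero_iff.1 h0 c (by simp [hc, hne]))
  · simp only [correctProb, errorProb, min_self, min_eq_left hΨ, and_self]
  · rw [correctProb_add_errorProb hc₀, min_self]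
    exact hμ.sum_measure_decodingRegion_eq_one hp hLH hL.nonempty hle

end InnerProduct

section Gaussian

open scoped NNReal

lemma isOpenPosMeasure_gaussianReal (m : ℝ) {v : ℝ≥0} (hv : v ≠ 0) :
    (gaussianReal m v).IsOpenPosMeasure :=
  (gaussianReal_absolutelyContinuous' m hv).isOpenPosMeasure

variable {E : Type*} [NormedAddCommGroup E] [InnerProductSpace ℝ E] [FiniteDimensional ℝ E]
  [MeasurableSpace E] [BorelSpace E]

lemma nullHyperplanes_stdGaussian : NullHyperplanes (stdGaussian E) := by
  intro v hv b
  have hlaw : (stdGaussian E).map (innerSL ℝ v) =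
      gaussianReal ((stdGaussian E)[innerSL ℝ v]) Var[innerSL ℝ v; stdGaussian E].toNNReal :=
    IsGaussian.map_eq_gaussianReal _
  have hvar : Var[innerSL ℝ v; stdGaussian E].toNNReal ≠ 0 := by
    rw [variance_dual_stdGaussian, innerSL_apply_norm]
    simpa using hv
  have := nullSingletonClass_gaussianReal (μ := (stdGaussian E)[innerSL ℝ v]) hvar
  have hnull : (stdGaussian E).map (innerSL ℝ v) {b} = 0 := by rw [hlaw, measure_singleton]
  rwa [Measure.map_apply (by fun_prop) (measurableSet_singleton b)] at hnull

instance isOpenPosMeasure_stdGaussian : (stdGaussian E).IsOpenPosMeasure := by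
  have := isOpenPosMeasure_gaussianReal 0 one_ne_zero
  have hcont : Continuous fun x : Fin (Module.finrank ℝ E) → ℝ =>
      ∑ i, x i • stdOrthonormalBasis ℝ E i := by fun_prop
  exact hcont.isOpenPosMeasure_map fun y =>
    ⟨(stdOrthonormalBasis ℝ E).repr y, (stdOrthonormalBasis ℝ E).sum_repr y⟩

end Gaussian

section BPSK

variable {n : ℕ} {A : ℝ}

/-- The BPSK point of `c`, placed in Euclidean space so that `dist` is `eucNorm` of the
difference. -/
noncomputable def bpskPoint (n : ℕ) (A : ℝ) (c : Fin n → ZMod 2) : EuclideanSpace ℝ (Fin n) :=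
  WithLp.toLp 2 (bpsk n A c)

/-- The law of the received vector in Euclidean space when `c` is transmitted over the Gaussian
channel. -/
noncomputable def receivedLaw (n : ℕ) (A : ℝ) (c : Fin n → ZMod 2) :
    Measure (EuclideanSpace ℝ (Fin n)) :=
  (stdGaussian (EuclideanSpace ℝ (Fin n))).map (bpskPoint n A c + ·)

lemma nullHyperplanes_receivedLaw (c : Fin n → ZMod 2) : NullHyperplanes (receivedLaw n A c) :=
  nullHyperplanes_stdGaussian.map_const_add _

instance isProbabilityMeasure_receivedLaw (c : Fin n → ZMod 2) :
    IsProbabilityMeasure (receivedLaw n A c) :=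
  Measure.isProbabilityMeasure_map (by fun_prop)

instance isOpenPosMeasure_receivedLaw (c : Fin n → ZMod 2) :
    (receivedLaw n A c).IsOpenPosMeasure :=
  (continuous_const_add _).isOpenPosMeasure_map (add_left_surjective _)

lemma eucNorm_sub_bpsk (y : Fin n → ℝ) (c : Fin n → ZMod 2) :
    eucNorm (y - bpsk n A c) = dist (WithLp.toLp 2 y) (bpskPoint n A c) := by
  simp [EuclideanSpace.dist_eq, eucNorm, bpskPoint, Real.dist_eq]

lemma Zreg_eq_preimage_decodingRegion (Ch Cl : Set (Fin n → ZMod 2)) (s : ℕ)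
    (c : Fin n → ZMod 2) :
    Zreg n A Ch Cl s c = WithLp.toLp 2 ⁻¹' decodingRegion (bpskPoint n A) Ch Cl s c := by
  simp only [Zreg, ambigSet, eucNorm_sub_bpsk]
  rfl

lemma nonempty_Zreg_iff {Ch Cl : Set (Fin n → ZMod 2)} {s : ℕ} {c : Fin n → ZMod 2} :
    (Zreg n A Ch Cl s c).Nonempty ↔ (decodingRegion (bpskPoint n A) Ch Cl s c).Nonempty := by
  rw [Zreg_eq_preimage_decodingRegion, (WithLp.toLp_surjective 2).nonempty_preimage]

lemma gaussPi_preimage_Zreg (Ch Cl : Set (Fin n → ZMod 2)) (s : ℕ) (c₀ c : Fin n → ZMod 2) :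
    gaussPi n ((fun z => bpsk n A c₀ + z) ⁻¹' Zreg n A Ch Cl s c) =
      receivedLaw n A c₀ (decodingRegion (bpskPoint n A) Ch Cl s c) := by
  have htoLp : MeasurableEmbedding (WithLp.toLp 2 : (Fin n → ℝ) → EuclideanSpace ℝ (Fin n)) :=
    (MeasurableEquiv.toLp 2 (Fin n → ℝ)).measurableEmbedding
  rw [receivedLaw, (measurableEmbedding_addLeft _).map_apply, ← map_pi_eq_stdGaussian,
    htoLp.map_apply, Zreg_eq_preimage_decodingRegion]
  rfl

lemma bpskPoint_injective (hA : A ≠ 0) : Function.Injective (bpskPoint n A) := by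
  intro c c' h
  funext i
  have hi : A * (1 - 2 * ((c i).val : ℝ)) = A * (1 - 2 * ((c' i).val : ℝ)) :=
    congrFun (WithLp.toLp_injective 2 h) i
  have hval : ((c i).val : ℝ) = (c' i).val := by linarith [mul_left_cancel₀ hA hi]
  exact ZMod.val_injective 2 (by exact_mod_cast hval)

/-- The coordinate reflection of Euclidean space which acts on BPSK points as addition of `e`. -/
noncomputable def signFlip (e : Fin n → ZMod 2) :
    EuclideanSpace ℝ (Fin n) ≃ₗᵢ[ℝ] EuclideanSpace ℝ (Fin n) :=
  .piLpCongrRight 2 fun i => if e i = 0 then .refl ℝ ℝ else .neg ℝ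

lemma signFlip_bpskPoint (e c : Fin n → ZMod 2) :
    signFlip e (bpskPoint n A c) = bpskPoint n A (c + e) := by
  have hflip : ∀ a b : ZMod 2,
      (if b = 0 then LinearIsometryEquiv.refl ℝ ℝ else .neg ℝ) (A * (1 - 2 * (a.val : ℝ))) =
        A * (1 - 2 * ((a + b).val : ℝ)) := by
    have hcases : ∀ a : ZMod 2, a = 0 ∨ a = 1 := by decide
    intro a b
    obtain rfl | rfl := hcases b
    · simp
    obtain rfl | rfl := hcases a <;> simp [CharTwo.add_self_eq_zero, ZMod.val_one] <;> ring
  ext i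
  exact hflip (c i) (e i)

lemma geometricallyUniform_bpskPoint {Ch Cl : Submodule (ZMod 2) (Fin n → ZMod 2)}
    (hsub : Cl ≤ Ch) :
    GeometricallyUniform (bpskPoint n A) (Ch : Set (Fin n → ZMod 2)) Cl := fun c hc c' hc' => by
  have he : c' - c ∈ Cl := Cl.sub_mem hc' hc
  exact ⟨Equiv.addRight (c' - c), signFlip (c' - c), (signFlip _).isometry,
    fun i => signFlip_bpskPoint _ i, fun i => Ch.add_mem_iff_left (hsub he),
    fun i => Cl.add_mem_iff_left he, add_sub_cancel c c'⟩

end BPSK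

theorem stmt6 (k m n : ℕ) (hk : 1 ≤ k) (hm : 1 ≤ m) (hn : k + m ≤ n)
    (A : ℝ) (hA : 0 < A)
    (Ch Cl : Submodule (ZMod 2) (Fin n → ZMod 2)) (hsub : Cl ≤ Ch)
    (hChcard : Nat.card Ch = 2 ^ (k + m)) (hClcard : Nat.card Cl = 2 ^ k)
    (lam : ℕ)
    (hlam : IsGreatest
      {s : ℕ | 1 ≤ s ∧ ∀ c ∈ Cl, (Zreg n A ↑Ch ↑Cl s c).Nonempty} lam)
    -- the transmitted codeword
    (cbar : Fin n → ZMod 2) (hcbar : cbar ∈ Cl)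
    -- probability of correct decoding with constrained maximum list size Ψ
    (Pc : ℕ → ℝ≥0∞)
    (hPc : ∀ Ψ, Pc Ψ = ∑ s ∈ Finset.Icc 1 (min lam Ψ),
      gaussPi n ((fun z => bpsk n A cbar + z) ⁻¹' Zreg n A ↑Ch ↑Cl s cbar))
    -- probability of undetected error with constrained maximum list size Ψ
    (Pe : ℕ → ℝ≥0∞)
    (hPe : ∀ Ψ, Pe Ψ = ∑ s ∈ Finset.Icc 1 (min lam Ψ),
      ∑ c ∈ Finset.univ.filter (fun c => c ∈ Cl ∧ c ≠ cbar),
        gaussPi n ((fun z => bpsk n A cbar + z) ⁻¹' Zreg n A ↑Ch ↑Cl s c)) :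
    (∀ Ψ : ℕ, 1 ≤ Ψ → Ψ < lam → Pc Ψ < Pc (Ψ + 1) ∧ Pe Ψ < Pe (Ψ + 1)) ∧
    (∀ Ψ : ℕ, lam ≤ Ψ → Pc Ψ = Pc lam ∧ Pe Ψ = Pe lam) ∧
    Pc lam + Pe lam = 1 := by
  simp only [nonempty_Zreg_iff, gaussPi_preimage_Zreg] at hlam hPc hPe
  obtain rfl : Pc = correctProb (receivedLaw n A cbar) (bpskPoint n A) Ch Cl lam cbar := funext hPc
  obtain rfl : Pe = errorProb (receivedLaw n A cbar) (bpskPoint n A) Ch Cl lam cbar := funext hPe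
  obtain ⟨hlt, hconst_sum⟩ := stmt6_general (nullHyperplanes_receivedLaw cbar)
    (bpskPoint_injective hA.ne').injOn hsub (nontrivial_of_card_eq_two_pow (by omega) hClcard)
    (geometricallyUniform_bpskPoint hsub) hlam hcbar
  exact ⟨fun Ψ _ => hlt Ψ, hconst_sum⟩
end

section
/- For A > 0 and y ∈ ℝⁿ define the terminating list rank L_A(y) = #{ c ∈ C_h : ‖y − x_A(c)‖ ≤ min_{c' ∈ C_l} ‖y − x_A(c')‖ }. Fix a transmitted codeword c̄ ∈ C_l. Then lim_{A → 0⁺} ∫_{ℝⁿ} L_A(x_A(c̄) + z) dγⁿ(z) = ∫_{ℝⁿ} L₁(z) dγⁿ(z); moreover the right-hand side equals ∫_{ℝⁿ} L_A(z) dγⁿ(z) for every A > 0 (the expected list rank when the transmitted point is the origin, which is independent of A). -/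
open MeasureTheory ProbabilityTheory Filter
open scoped BigOperators Topology

/-- The terminating list rank of a received point `y`: the number of
higher-rate codewords whose BPSK point lies within the distance from `y` to
the closest lower-rate BPSK point. -/
noncomputable def listRank (n : ℕ) (Ch Cl : Set (Fin n → ZMod 2)) (A : ℝ)
    (y : Fin n → ℝ) : ℕ :=
  Set.ncard {c | c ∈ Ch ∧ eucNorm (y - bpsk n A c) ≤
    sInf ((fun c' => eucNorm (y - bpsk n A c')) '' Cl)}

/-! All BPSK points of amplitude `A` have the same norm, so comparing the distances from `y` to two
of them amounts to comparing correlations with the unit-amplitude points, where `A` has disappeared.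
The list rank is therefore a bounded function of `y` alone, locally constant wherever no two
codewords have equal correlation with `y`. The ties lie on finitely many hyperplanes through the
origin, which are Gaussian-null, so dominated convergence applies as the transmitted point tends to
the origin. -/

lemma eventually_le_iff_le_of_ne {X α : Type*} [TopologicalSpace X] [TopologicalSpace α]
    [LinearOrder α] [OrderClosedTopology α] {f g : X → α} {x : X} (hf : ContinuousAt f x)
    (hg : ContinuousAt g x) (hne : f x ≠ g x) : ∀ᶠ y in 𝓝 x, (f y ≤ g y ↔ f x ≤ g x) := by
  rcases hne.lt_or_gt with hlt | hgt
  · filter_upwards [hf.eventually_lt hg hlt] with y hy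
    exact iff_of_true hy.le hlt.le
  · filter_upwards [hg.eventually_lt hf hgt] with y hy
    exact iff_of_false hy.not_ge hgt.not_ge

lemma tendsto_integral_add_of_ae_continuousAt {E F : Type*} [TopologicalSpace E]
    [FirstCountableTopology E] [AddMonoid E] [ContinuousAdd E] [MeasurableSpace E]
    [MeasurableAdd E] [NormedAddCommGroup F] [NormedSpace ℝ F] {μ : Measure E}
    [IsFiniteMeasure μ] {f : E → F} (hf : StronglyMeasurable f) {C : ℝ} (hC : ∀ z, ‖f z‖ ≤ C)
    (hcont : ∀ᵐ z ∂μ, ContinuousAt f z) :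
    Tendsto (fun x => ∫ z, f (x + z) ∂μ) (𝓝 0) (𝓝 (∫ z, f z ∂μ)) := by
  refine tendsto_integral_filter_of_dominated_convergence (fun _ => C)
    (.of_forall fun x => (hf.comp_measurable (measurable_const_add x)).aestronglyMeasurable)
    (.of_forall fun x => .of_forall fun z => hC (x + z)) (integrable_const C) ?_
  filter_upwards [hcont] with z hz
  have hshift : Tendsto (fun x => x + z) (𝓝 0) (𝓝 z) := by
    simpa only [zero_add] using (continuous_add_const z).tendsto 0
  exact hz.tendsto.comp hshift

section ProductMeasure

variable {ι : Type*} [Fintype ι]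

lemma measure_pi_eq_zero_of_forall_update [DecidableEq ι] {X : ι → Type*}
    [∀ i, MeasurableSpace (X i)] (μ : ∀ i, Measure (X i)) [∀ i, SigmaFinite (μ i)]
    {s : Set (∀ i, X i)} (hs : MeasurableSet s) (i : ι)
    (hnull : ∀ x, μ i {t | Function.update x i t ∈ s} = 0) : Measure.pi μ s = 0 := by
  have hmarginal : ∫⋯∫⁻_{i}, s.indicator 1 ∂μ = ∫⋯∫⁻_{i}, 0 ∂μ := by
    ext x
    simp only [lmarginal_singleton, Pi.zero_apply, lintegral_zero]
    exact (lintegral_indicator_one (measurable_update x hs)).trans (hnull x)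
  calc Measure.pi μ s = ∫⁻ x, s.indicator 1 x ∂Measure.pi μ := (lintegral_indicator_one hs).symm
    _ = ∫⁻ _, 0 ∂Measure.pi μ :=
      lintegral_eq_of_lmarginal_eq {i} (measurable_one.indicator hs) measurable_zero hmarginal
    _ = 0 := lintegral_zero

lemma ae_pi_dotProduct_ne (μ : ι → Measure ℝ) [∀ i, SigmaFinite (μ i)]
    [∀ i, NullSingletonClass (μ i)] {d : ι → ℝ} (hd : d ≠ 0) (a : ℝ) :
    ∀ᵐ z ∂Measure.pi μ, z ⬝ᵥ d ≠ a := by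
  classical
  obtain ⟨i, hi⟩ := Function.ne_iff.1 hd
  have hmeas : MeasurableSet {z : ι → ℝ | z ⬝ᵥ d = a} :=
    (isClosed_eq (by fun_prop) continuous_const).measurableSet
  simp only [ae_iff, not_not]
  refine measure_pi_eq_zero_of_forall_update μ hmeas i fun x => ?_
  refine Set.Subsingleton.measure_zero (fun t ht t' ht' => ?_) _
  have hdiff : Function.update x i t - Function.update x i t' = Pi.single i (t - t') := by
    rw [← Function.update_sub, sub_self, Pi.single]
  have hdot : (t - t') * d i = 0 := by
    rw [← single_dotProduct, ← hdiff, sub_dotProduct, sub_eq_zero]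
    exact ht.trans ht'.symm
  exact sub_eq_zero.1 ((mul_eq_zero.1 hdot).resolve_right hi)

end ProductMeasure

section CorrelationRank

variable {ι κ : Type*} [Fintype κ]

/-- The rank of `y` by correlation: the number of signals of the list `H` that correlate with `y`
at least as well as every signal of `L`. For signals of equal energy this is the list rank by
distance, but it involves no amplitude. -/
noncomputable def corrRank (s : ι → κ → ℝ) (H L : Set ι) (y : κ → ℝ) : ℕ :=
  {c | c ∈ H ∧ ∀ c' ∈ L, y ⬝ᵥ s c' ≤ y ⬝ᵥ s c}.ncard

lemma corrRank_le_card [Finite ι] (s : ι → κ → ℝ) (H L : Set ι) (y : κ → ℝ) :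
    corrRank s H L y ≤ Nat.card ι :=
  Set.ncard_le_card _

lemma measurable_corrRank [Countable ι] (s : ι → κ → ℝ) (H L : Set ι) :
    Measurable (corrRank s H L) := by
  refine measurable_ncard.comp (measurable_set_iff.2 fun c => ?_)
  have hcorr (c : ι) : Measurable fun y : κ → ℝ => y ⬝ᵥ s c := by fun_prop
  exact measurable_const.and <| .forall fun c' => .imp measurable_const <|
    measurableSet_setOfPred.1 (measurableSet_le (hcorr c') (hcorr c))

lemma continuousAt_corrRank [Finite ι] {s : ι → κ → ℝ} {y : κ → ℝ}
    (hy : Function.Injective fun c => y ⬝ᵥ s c) (H L : Set ι) :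
    ContinuousAt (corrRank s H L) y := by
  have hcont (c : ι) : ContinuousAt (fun w => w ⬝ᵥ s c) y := by fun_prop
  have horder : ∀ᶠ w in 𝓝 y, ∀ c c', (w ⬝ᵥ s c' ≤ w ⬝ᵥ s c ↔ y ⬝ᵥ s c' ≤ y ⬝ᵥ s c) := by
    refine eventually_all.2 fun c => eventually_all.2 fun c' => ?_
    rcases eq_or_ne c' c with rfl | hne
    · simp only [le_refl, eventually_true]
    · exact eventually_le_iff_le_of_ne (hcont c') (hcont c) (hy.ne hne)
  refine tendsto_const_nhds.congr' ?_
  filter_upwards [horder] with w hw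
  simp only [corrRank, hw]

lemma ae_injective_dotProduct [Countable ι] {s : ι → κ → ℝ} (hs : Function.Injective s)
    {μ : Measure (κ → ℝ)} (hμ : ∀ d ≠ 0, ∀ᵐ z ∂μ, z ⬝ᵥ d ≠ 0) :
    ∀ᵐ z ∂μ, Function.Injective fun c => z ⬝ᵥ s c := by
  refine ae_all_iff.2 fun c => ae_all_iff.2 fun c' => ?_
  rcases eq_or_ne c c' with rfl | hne
  · simp only [imp_self, ae_of_all, implies_true]
  · filter_upwards [hμ (s c - s c') (sub_ne_zero.2 (hs.ne hne))] with z hz heq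
    exact absurd (by rw [dotProduct_sub, sub_eq_zero]; exact heq) hz

lemma tendsto_integral_corrRank_add [Finite ι] {s : ι → κ → ℝ} (hs : Function.Injective s)
    {μ : Measure (κ → ℝ)} [IsFiniteMeasure μ] (hμ : ∀ d ≠ 0, ∀ᵐ z ∂μ, z ⬝ᵥ d ≠ 0) (H L : Set ι) :
    Tendsto (fun x => ∫ z, (corrRank s H L (x + z) : ℝ) ∂μ) (𝓝 0)
      (𝓝 (∫ z, (corrRank s H L z : ℝ) ∂μ)) := by
  have hmeas : Measurable fun z => (corrRank s H L z : ℝ) :=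
    measurable_from_nat.comp (measurable_corrRank s H L)
  refine tendsto_integral_add_of_ae_continuousAt hmeas.stronglyMeasurable
    (C := Nat.card ι) (fun z => ?_) ?_
  · rw [Real.norm_natCast]
    exact_mod_cast corrRank_le_card s H L z
  · filter_upwards [ae_injective_dotProduct hs hμ] with z hz
    exact continuous_of_discreteTopology.continuousAt.comp (continuousAt_corrRank hz H L)

end CorrelationRank

section BPSK

variable {n : ℕ}

lemma bpsk_eq_smul (A : ℝ) (c : Fin n → ZMod 2) : bpsk n A c = A • bpsk n 1 c := by
  ext i
  simp only [bpsk, Pi.smul_apply, smul_eq_mul, one_mul]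

lemma bpsk_one_injective : Function.Injective (bpsk n 1) := by
  intro c c' h
  funext i
  have hval : ((c i).val : ℝ) = (c' i).val := by
    have hi := congrFun h i
    simp only [bpsk] at hi
    linarith
  exact ZMod.val_injective 2 (Nat.cast_injective hval)

lemma bpsk_one_dotProduct_self (c : Fin n → ZMod 2) : bpsk n 1 c ⬝ᵥ bpsk n 1 c = n := by
  have hcoord (b : ZMod 2) : (1 - 2 * (b.val : ℝ)) * (1 - 2 * (b.val : ℝ)) = 1 := by
    fin_cases b <;> norm_num [ZMod.val]
  simp only [dotProduct, bpsk, one_mul, hcoord, Finset.sum_const, Finset.card_univ,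
    Fintype.card_fin, nsmul_eq_mul, mul_one]

lemma eucNorm_sub_smul_le_iff {y u v : Fin n → ℝ} (huv : u ⬝ᵥ u = v ⬝ᵥ v) {A : ℝ} (hA : 0 < A) :
    eucNorm (y - A • u) ≤ eucNorm (y - A • v) ↔ y ⬝ᵥ v ≤ y ⬝ᵥ u := by
  have hexpand (w : Fin n → ℝ) :
      ∑ i, (y - A • w) i ^ 2 = y ⬝ᵥ y - 2 * A * (y ⬝ᵥ w) + A ^ 2 * (w ⬝ᵥ w) := by
    simp only [dotProduct, Finset.mul_sum, ← Finset.sum_sub_distrib, ← Finset.sum_add_distrib]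
    refine Finset.sum_congr rfl fun i _ => ?_
    simp only [Pi.sub_apply, Pi.smul_apply, smul_eq_mul]
    ring
  rw [eucNorm, eucNorm, Real.sqrt_le_sqrt_iff (Finset.sum_nonneg fun i _ => sq_nonneg _),
    hexpand, hexpand, huv, add_le_add_iff_right, sub_le_sub_iff_left,
    mul_le_mul_iff_right₀ (by positivity)]

lemma listRank_eq_corrRank (Ch : Set (Fin n → ZMod 2)) {Cl : Set (Fin n → ZMod 2)}
    (hCl : Cl.Nonempty) {A : ℝ} (hA : 0 < A) (y : Fin n → ℝ) :
    listRank n Ch Cl A y = corrRank (bpsk n 1) Ch Cl y := by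
  have hbdd : BddBelow ((fun c' => eucNorm (y - bpsk n A c')) '' Cl) :=
    ⟨0, Set.forall_mem_image.2 fun _ _ => Real.sqrt_nonneg _⟩
  have hclose (c c' : Fin n → ZMod 2) : eucNorm (y - bpsk n A c) ≤ eucNorm (y - bpsk n A c') ↔
      y ⬝ᵥ bpsk n 1 c' ≤ y ⬝ᵥ bpsk n 1 c := by
    rw [bpsk_eq_smul A c, bpsk_eq_smul A c']
    exact eucNorm_sub_smul_le_iff (by simp only [bpsk_one_dotProduct_self]) hA
  simp only [listRank, corrRank, le_csInf_iff hbdd (hCl.image _), Set.forall_mem_image, hclose]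

lemma tendsto_bpsk_zero (c : Fin n → ZMod 2) :
    Tendsto (fun A => bpsk n A c) (𝓝 0) (𝓝 0) := by
  have hcont : Continuous fun A : ℝ => A • bpsk n 1 c := by fun_prop
  simpa only [← bpsk_eq_smul] using hcont.tendsto' 0 0 (zero_smul ℝ _)

end BPSK

instance (n : ℕ) : IsProbabilityMeasure (gaussPi n) :=
  inferInstanceAs (IsProbabilityMeasure (Measure.pi _))

lemma ae_gaussPi_dotProduct_ne_zero {n : ℕ} (d : Fin n → ℝ) (hd : d ≠ 0) :
    ∀ᵐ z ∂gaussPi n, z ⬝ᵥ d ≠ 0 :=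
  have := nullSingletonClass_gaussianReal (μ := 0) one_ne_zero
  ae_pi_dotProduct_ne (fun _ => gaussianReal 0 1) hd 0

theorem stmt12_general {n : ℕ} (Ch : Set (Fin n → ZMod 2)) {Cl : Set (Fin n → ZMod 2)}
    (hCl : Cl.Nonempty) {μ : Measure (Fin n → ℝ)} [IsFiniteMeasure μ]
    (hμ : ∀ d ≠ 0, ∀ᵐ z ∂μ, z ⬝ᵥ d ≠ 0) {x : ℝ → Fin n → ℝ} (hx : Tendsto x (𝓝[>] 0) (𝓝 0)) :
    Tendsto (fun A => ∫ z, (listRank n Ch Cl A (x A + z) : ℝ) ∂μ) (𝓝[>] 0)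
      (𝓝 (∫ z, (listRank n Ch Cl 1 z : ℝ) ∂μ)) ∧
    ∀ A : ℝ, 0 < A →
      ∫ z, (listRank n Ch Cl A z : ℝ) ∂μ = ∫ z, (listRank n Ch Cl 1 z : ℝ) ∂μ := by
  simp only [listRank_eq_corrRank Ch hCl one_pos]
  constructor
  · refine ((tendsto_integral_corrRank_add bpsk_one_injective hμ Ch Cl).comp hx).congr' ?_
    filter_upwards [self_mem_nhdsWithin] with A hA
    simp only [Function.comp_apply, listRank_eq_corrRank Ch hCl hA]
  · intro A hA
    simp only [listRank_eq_corrRank Ch hCl hA]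

theorem stmt12 (k m n : ℕ) (hk : 1 ≤ k) (hm : 1 ≤ m) (hn : k + m ≤ n)
    (Ch Cl : Submodule (ZMod 2) (Fin n → ZMod 2)) (hsub : Cl ≤ Ch)
    (hChcard : Nat.card Ch = 2 ^ (k + m)) (hClcard : Nat.card Cl = 2 ^ k)
    -- the transmitted codeword
    (cbar : Fin n → ZMod 2) (hcbar : cbar ∈ Cl) :
    Tendsto
      (fun A : ℝ =>
        ∫ z, (listRank n ↑Ch ↑Cl A (bpsk n A cbar + z) : ℝ) ∂(gaussPi n))
      (𝓝[>] (0 : ℝ))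
      (𝓝 (∫ z, (listRank n ↑Ch ↑Cl 1 z : ℝ) ∂(gaussPi n))) ∧
    ∀ A : ℝ, 0 < A →
      ∫ z, (listRank n ↑Ch ↑Cl A z : ℝ) ∂(gaussPi n) =
        ∫ z, (listRank n ↑Ch ↑Cl 1 z : ℝ) ∂(gaussPi n) :=
  stmt12_general (n := n) Ch Cl.nonempty ae_gaussPi_dotProduct_ne_zero
    ((tendsto_bpsk_zero cbar).mono_left nhdsWithin_le_nhds)
end
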